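/- arXiv:2504.14352 — 2 statements merged into one kernel-verified Lean document; each statement's English description precedes it below -/
import Mathlib

section
/- Let G be a connected locally finite simple graph and let x and y be two adjacent vertices of equal degree d. Then κ_LLY(x,y) = (1/d)·(d + 1 − min_φ ∑_{v ∈ N_x} d(v, φ(v))), where N_x := S_1(x) \ (S_1(y) ∪ {y}), N_y := S_1(y) \ (S_1(x) ∪ {x}), and the minimum is taken over all bijections φ from N_x to N_y. -/
/-!
Write `ε = 1 - p`, `e = p - ε / d`, and let `B(x)` be the closed unit ball about `x`. Then
`μ_x^p = e δ_x + (ε / d) 1_{B(x)}`, where `e ≥ 0` as soon as `p ≥ 1/2`, and the common part of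
the two measures can stay in place. What has to be moved is `e` from `x` to `y`, and `ε / d` from
each point of `N_x = B(x) \ B(y)` to the points of `N_y = B(y) \ B(x)`. So
`W(μ_x^p, μ_y^p) = e + (ε / d) M`, with `M` the minimal cost of a bijection `N_x → N_y`, and
`(1 - W) / (1 - p) = (d + 1 - M) / d` for all `p` close to `1`.

The upper bound on `W` is the explicit plan (`isTransportPlan_matching`). The lower bound is
Kantorovich duality: integral LP duality for the assignment problem (`exists_tight_potentials`)
applied to `{x} ∪ N_x` and `{y} ∪ N_y` gives potentials `u, v` with `u a + v b ≤ d(a, b)`, tight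
along a bijection. They can always be taken to be tight on `(x, y)` as well: if the bijection
sends `x` to `w` and `a` to `y`, then
`u x + v y + u a + v w = d(x, w) + d(a, y) = 4 ≥ d(x, y) + d(a, w)`,
so both `(x, y)` and `(a, w)` are tight (`exists_matching_potentials`). The `1`-Lipschitz function
`f z = min_b (d(z, b) - v b)` then certifies the lower bound.
-/


open Filter Finset

attribute [local instance] Classical.propDecidable

variable {V : Type*}

/-- The measure `μ_x^p`. -/
noncomputable def muP [Fintype V] (G : SimpleGraph V) (p : ℝ) (x : V) : V → ℝ :=
  fun z => if z = x then p else if G.Adj x z then (1 - p) / (G.degree x) else 0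

/-- A transport plan between two measures. -/
def IsTransportPlan [Fintype V] (μ₁ μ₂ : V → ℝ) (π : V → V → ℝ) : Prop :=
  (∀ u v, 0 ≤ π u v ∧ π u v ≤ 1) ∧
  (∀ u, ∑ v, π u v = μ₁ u) ∧ (∀ v, ∑ u, π u v = μ₂ v)

/-- The cost of a transport plan. -/
noncomputable def planCost [Fintype V] (G : SimpleGraph V) (π : V → V → ℝ) : ℝ :=
  ∑ u, ∑ v, (G.dist u v : ℝ) * π u v

/-- The Wasserstein distance between two measures on a graph. -/
noncomputable def Wdist [Fintype V] (G : SimpleGraph V) (μ₁ μ₂ : V → ℝ) : ℝ :=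
  sInf {c : ℝ | ∃ π, IsTransportPlan μ₁ μ₂ π ∧ c = planCost G π}

/-- The Lin-Lu-Yau curvature of a pair of vertices. -/
noncomputable def kappaLLY [Fintype V] (G : SimpleGraph V) (x y : V) : ℝ :=
  limUnder (nhdsWithin 1 (Set.Iio (1 : ℝ)))
    (fun p => (1 - Wdist G (muP G p x) (muP G p y) / (G.dist x y)) / (1 - p))

/-- `κ_LLY^{(i)}(G)`: infimum of the curvature over pairs at distance `i`. -/
noncomputable def kappaLLYscale [Fintype V] (G : SimpleGraph V) (i : ℕ) : ℝ :=
  sInf {k : ℝ | ∃ x y : V, G.dist x y = i ∧ k = kappaLLY G x y}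

/-- `κ_LLY(G)`: infimum of the curvature over adjacent pairs. -/
noncomputable def kappaLLYedge [Fintype V] (G : SimpleGraph V) : ℝ :=
  sInf {k : ℝ | ∃ x y : V, G.Adj x y ∧ k = kappaLLY G x y}

/-- The vertex connectivity `k(G)`. -/
noncomputable def vertexConnectivity [Fintype V] (G : SimpleGraph V) : ℕ :=
  sInf {n : ℕ | ∃ S : Finset V, S.card = n ∧
    (¬ (G.induce ((S : Set V)ᶜ)).Connected ∨ ((S : Set V)ᶜ).Subsingleton)}

/-- The edge connectivity `k'(G)`. -/
noncomputable def edgeConnectivity [Fintype V] (G : SimpleGraph V) : ℕ :=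
  sInf {n : ℕ | ∃ F : Finset (Sym2 V), F.card = n ∧ (F : Set (Sym2 V)) ⊆ G.edgeSet ∧
    ¬ (G.deleteEdges (F : Set (Sym2 V))).Connected}

/-- Amply regular graph with parameters `(d, α, β)`. -/
def IsAmplyRegular [Fintype V] (G : SimpleGraph V) (d α β : ℕ) : Prop :=
  G.IsRegularOfDegree d ∧
  (∀ u v, G.Adj u v → (G.neighborFinset u ∩ G.neighborFinset v).card = α) ∧
  (∀ u v : V, G.dist u v = 2 → (G.neighborFinset u ∩ G.neighborFinset v).card = β)

/-- A matching given as a finite set of ordered pairs satisfying a constraint `P`. -/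
def IsPairMatching (P : V → V → Prop) (M : Finset (V × V)) : Prop :=
  (∀ e ∈ M, P e.1 e.2) ∧
  ∀ e ∈ M, ∀ f ∈ M, e ≠ f → e.1 ≠ f.1 ∧ e.1 ≠ f.2 ∧ e.2 ≠ f.1 ∧ e.2 ≠ f.2

/-! ### Duality for the assignment problem -/

/-- Integral duality for the assignment problem. Integer potentials of maximal total value admit
a perfect matching by tight pairs: a set violating Hall's condition would allow raising `u` by `1`
on it and lowering `v` by `1` on its fewer tight partners. -/
theorem exists_tight_potentials {α β : Type*} [Fintype α] [Fintype β] (e : α ≃ β)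
    (c : α → β → ℕ) :
    ∃ (u : α → ℤ) (v : β → ℤ) (σ : α ≃ β),
      (∀ i j, u i + v j ≤ c i j) ∧ ∀ i, u i + v (σ i) = c i (σ i) := by
  obtain ⟨m, ⟨u, v, huv, hm⟩, hmax⟩ := Int.exists_greatest_of_bdd
    (P := fun m => ∃ (u : α → ℤ) (v : β → ℤ), (∀ i j, u i + v j ≤ c i j) ∧
      ∑ i, u i + ∑ j, v j = m)
    ⟨∑ i, (c i (e i) : ℤ), by
      rintro _ ⟨u, v, h, rfl⟩
      rw [← Equiv.sum_comp e v, ← Finset.sum_add_distrib]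
      exact Finset.sum_le_sum fun i _ => h i (e i)⟩
    ⟨0, 0, 0, fun i j => by simp, by simp⟩
  let t : α → Finset β := fun i => Finset.univ.filter fun j => u i + v j = c i j
  have hall : ∀ s : Finset α, s.card ≤ (s.biUnion t).card := by
    intro s
    by_contra! hs
    have key := hmax (m + s.card - (s.biUnion t).card)
      ⟨fun i => u i + if i ∈ s then 1 else 0, fun j => v j - if j ∈ s.biUnion t then 1 else 0,
        ?_, ?_⟩
    · omega
    · intro i j
      have h := huv i j
      by_cases hi : i ∈ s <;> by_cases hj : j ∈ s.biUnion t <;> simp only [hi, hj, if_true, if_false]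
      · omega
      · have : u i + v j ≠ c i j := fun h' =>
          hj (Finset.mem_biUnion.2 ⟨i, hi, by simpa [t] using h'⟩)
        omega
      · omega
      · omega
    · rw [Finset.sum_add_distrib, Finset.sum_sub_distrib]
      simp only [Finset.sum_ite_mem, Finset.univ_inter, Finset.sum_const, nsmul_eq_mul, mul_one]
      omega
  obtain ⟨f, hf, hft⟩ := (Finset.all_card_le_biUnion_card_iff_exists_injective t).1 hall
  refine ⟨u, v, Equiv.ofBijective f
    ((Fintype.bijective_iff_injective_and_card f).2 ⟨hf, Fintype.card_congr e⟩), huv, ?_⟩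
  intro i
  simpa [t] using hft i

/-! ### Kantorovich duality and the measures `μ_x^p` -/

/-- The cost of a plan bounds the difference of the integrals of a `1`-Lipschitz function. -/
theorem sum_sub_sum_le_planCost {V : Type*} [Fintype V] (G : SimpleGraph V) {μ₁ μ₂ : V → ℝ}
    {π : V → V → ℝ} (h : IsTransportPlan μ₁ μ₂ π) (f : V → ℝ)
    (hf : ∀ a b, f a - f b ≤ G.dist a b) :
    ∑ z, f z * μ₁ z - ∑ z, f z * μ₂ z ≤ planCost G π := by
  obtain ⟨h0, h1, h2⟩ := h
  have e1 : ∑ z, f z * μ₁ z = ∑ a, ∑ b, f a * π a b := by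
    simp only [← h1, Finset.mul_sum]
  have e2 : ∑ z, f z * μ₂ z = ∑ a, ∑ b, f b * π a b := by
    rw [Finset.sum_comm]
    simp only [← h2, Finset.mul_sum]
  rw [e1, e2, planCost, ← Finset.sum_sub_distrib]
  refine Finset.sum_le_sum fun a _ => ?_
  rw [← Finset.sum_sub_distrib]
  refine Finset.sum_le_sum fun b _ => ?_
  rw [← sub_mul]
  exact mul_le_mul_of_nonneg_right (hf a b) (h0 a b).1

theorem muP_eq {V : Type*} [Fintype V] (G : SimpleGraph V) (p : ℝ) (x z : V) :
    muP G p x z = (if z = x then p - (1 - p) / G.degree x else 0) +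
      (if z ∈ insert x (G.neighborFinset x) then (1 - p) / G.degree x else 0) := by
  unfold muP
  by_cases h : z = x
  · simp [h]
  · simp [h]

theorem sum_mul_muP {V : Type*} [Fintype V] (G : SimpleGraph V) (p : ℝ) (x : V) (f : V → ℝ) :
    ∑ z, f z * muP G p x z = (p - (1 - p) / G.degree x) * f x +
      (1 - p) / G.degree x * ∑ z ∈ insert x (G.neighborFinset x), f z := by
  simp only [muP_eq, mul_add, Finset.sum_add_distrib, mul_ite, mul_zero, Finset.sum_ite_mem,
    Finset.univ_inter, Finset.sum_ite_eq', Finset.mem_univ, if_true, ← Finset.sum_mul]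
  ring

theorem neighborFinset_sdiff_eq {V : Type*} [Fintype V] (G : SimpleGraph V) {x y : V}
    (hxy : G.Adj x y) :
    G.neighborFinset x \ insert y (G.neighborFinset y) =
      insert x (G.neighborFinset x) \ insert y (G.neighborFinset y) := by
  rw [Finset.insert_sdiff_of_mem]
  simp [hxy.symm]

/-! ### Optimal matchings and Lipschitz certificates -/

/-- An optimal matching `N_x → N_y` together with dual potentials, tight on the pair `(x, y)`. -/
theorem exists_matching_potentials {V : Type*} [Fintype V] (G : SimpleGraph V)
    (hconn : G.Connected) {x y : V} (hxy : G.Adj x y) (hdeg : G.degree x = G.degree y) :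
    ∃ (φ : {v // v ∈ G.neighborFinset x \ insert y (G.neighborFinset y)} ≃
           {v // v ∈ G.neighborFinset y \ insert x (G.neighborFinset x)}) (f : V → ℝ),
      (∀ a b, f a - f b ≤ G.dist a b) ∧ 1 ≤ f x - f y ∧
      ∀ a, (G.dist a.1 (φ a).1 : ℝ) ≤ f a.1 - f (φ a).1 := by
  set A := G.neighborFinset x \ insert y (G.neighborFinset y) with hA
  set B := G.neighborFinset y \ insert x (G.neighborFinset x) with hB
  have hcard : A.card = B.card := by
    rw [hA, hB, neighborFinset_sdiff_eq G hxy, neighborFinset_sdiff_eq G hxy.symm]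
    apply Finset.card_sdiff_comm
    rw [Finset.card_insert_of_notMem (by simp), Finset.card_insert_of_notMem (by simp)]
    simpa using hdeg
  have e : {v // v ∈ A} ≃ {v // v ∈ B} := Finset.equivOfCardEq hcard
  -- `none` stands for `x` in the source and for `y` in the target
  let s : Option {v // v ∈ A} → V := fun o => o.elim x Subtype.val
  let t : Option {v // v ∈ B} → V := fun o => o.elim y Subtype.val
  obtain ⟨u, v, σ, huv, hσ⟩ := exists_tight_potentials (Equiv.optionCongr e)
    (fun i j => G.dist (s i) (t j))
  have dxy : G.dist x y = 1 := SimpleGraph.dist_eq_one_iff_adj.2 hxy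
  have two_le : ∀ {a b : V}, a ≠ b → ¬ G.Adj a b → 2 ≤ G.dist a b := by
    intro a b h1 h2
    have := hconn.pos_dist_of_ne h1
    have : G.dist a b ≠ 1 := fun h => h2 (SimpleGraph.dist_eq_one_iff_adj.1 h)
    omega
  have hxB : ∀ b : {v // v ∈ B}, 2 ≤ G.dist x b.1 := by
    rintro ⟨b, hb⟩
    simp only [hB, Finset.mem_sdiff, Finset.mem_insert, SimpleGraph.mem_neighborFinset,
      not_or] at hb
    exact two_le (Ne.symm hb.2.1) hb.2.2
  have hAy : ∀ a : {v // v ∈ A}, 2 ≤ G.dist a.1 y := by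
    rintro ⟨a, ha⟩
    simp only [hA, Finset.mem_sdiff, Finset.mem_insert, SimpleGraph.mem_neighborFinset,
      not_or] at ha
    exact two_le ha.2.1 fun h => ha.2.2 h.symm
  have hAB : ∀ (a : {v // v ∈ A}) (b : {v // v ∈ B}), G.dist a.1 b.1 ≤ 3 := by
    rintro ⟨a, ha⟩ ⟨b, hb⟩
    simp only [hA, hB, Finset.mem_sdiff, SimpleGraph.mem_neighborFinset] at ha hb
    have h1 := hconn.dist_triangle (u := a) (v := x) (w := b)
    have h2 := hconn.dist_triangle (u := x) (v := y) (w := b)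
    have h3 : G.dist a x = 1 := SimpleGraph.dist_eq_one_iff_adj.2 ha.1.symm
    have h4 : G.dist y b = 1 := SimpleGraph.dist_eq_one_iff_adj.2 hb.1
    dsimp only
    omega
  have hnone : u none + v none = 1 ∧
      ∀ a, u (some a) + v (some (Equiv.removeNone σ a)) = G.dist a.1 (Equiv.removeNone σ a).1 := by
    have swapped : ∀ a b, σ (some a) = none → σ none = some b →
        u none + v none = 1 ∧ u (some a) + v (some b) = G.dist a.1 b.1 := by
      intro a b h1 h2
      have q1 := hσ (some a)
      have q2 := hσ none
      have q3 := huv none none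
      have q4 := huv (some a) (some b)
      rw [h1] at q1
      rw [h2] at q2
      simp only [s, t, Option.elim] at q1 q2 q3 q4
      have := hAy a
      have := hxB b
      have := hAB a b
      omega
    constructor
    · rcases h : σ none with _ | b
      · have := hσ none
        rw [h] at this
        simpa [s, t, dxy] using this
      · rcases h' : σ.symm none with _ | a
        · rw [Equiv.symm_apply_eq, h] at h'
          simp at h'
        · exact (swapped a b (by rw [← h', Equiv.apply_symm_apply]) h).1
    · intro a
      rcases h : σ (some a) with _ | b
      · exact (swapped a _ h (Equiv.removeNone_none σ h).symm).2
      · have h' := Equiv.removeNone_some σ ⟨b, h⟩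
        have := hσ (some a)
        rwa [← h'] at this
  let f : V → ℝ := fun z =>
    Finset.univ.inf' Finset.univ_nonempty fun j => (G.dist z (t j) : ℝ) - v j
  have hfs : ∀ i, (u i : ℝ) ≤ f (s i) := by
    intro i
    refine Finset.le_inf' _ _ fun j _ => ?_
    have : ((u i + v j : ℤ) : ℝ) ≤ ((G.dist (s i) (t j) : ℤ) : ℝ) := by exact_mod_cast huv i j
    push_cast at this
    linarith
  have hft : ∀ j, f (t j) ≤ -(v j : ℝ) := by
    intro j
    refine (Finset.inf'_le _ (Finset.mem_univ j)).trans ?_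
    simp
  refine ⟨Equiv.removeNone σ, f, ?_, ?_, ?_⟩
  · intro a b
    rw [sub_le_iff_le_add, ← sub_le_iff_le_add']
    refine Finset.le_inf' _ _ fun j _ => ?_
    have h1 : f a ≤ (G.dist a (t j) : ℝ) - v j := Finset.inf'_le _ (Finset.mem_univ j)
    have h2 : (G.dist a (t j) : ℝ) ≤ G.dist a b + G.dist b (t j) := by
      exact_mod_cast hconn.dist_triangle
    linarith
  · have h1 := hfs none
    have h2 := hft none
    have h3 : (u none : ℝ) + v none = 1 := by exact_mod_cast hnone.1
    simp only [s, t, Option.elim] at h1 h2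
    linarith
  · intro a
    have h1 := hfs (some a)
    have h2 := hft (some (Equiv.removeNone σ a))
    have h3 : (u (some a) : ℝ) + v (some (Equiv.removeNone σ a)) =
        G.dist a.1 (Equiv.removeNone σ a).1 := by exact_mod_cast hnone.2 a
    simp only [s, t, Option.elim] at h1 h2
    linarith

/-! ### The transport plan of a matching -/

/-- The map which agrees with the bijection `φ : A ≃ B` on `A` and fixes all other points. -/
noncomputable def extendById {V : Type*} {A B : Finset V} (φ : {v // v ∈ A} ≃ {v // v ∈ B}) :
    V → V :=
  fun z => if h : z ∈ A then (φ ⟨z, h⟩).1 else z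

/-- A bijection `N_x → N_y` gives a transport plan from `μ_x^p` to `μ_y^p`: common mass stays,
`N_x` is moved along the bijection, and the remaining mass at `x` goes to `y`. -/
theorem isTransportPlan_matching {V : Type*} [Fintype V] (G : SimpleGraph V)
    {x y : V} (hxy : G.Adj x y) (hdeg : G.degree x = G.degree y)
    {Bx By : Finset V} (hBx : Bx = insert x (G.neighborFinset x))
    (hBy : By = insert y (G.neighborFinset y))
    (φ : {v // v ∈ G.neighborFinset x \ By} ≃ {v // v ∈ G.neighborFinset y \ Bx})
    {p : ℝ} (hp : 1 / 2 ≤ p) (hp1 : p ≤ 1) :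
    ∃ π, IsTransportPlan (muP G p x) (muP G p y) π ∧
      planCost G π = (p - (1 - p) / G.degree x) +
        (1 - p) / G.degree x * ∑ a, (G.dist a.1 (φ a).1 : ℝ) := by
  set r : ℝ := (1 - p) / G.degree x with hr
  have hd : (1 : ℝ) ≤ G.degree x := by
    exact_mod_cast (G.degree_pos_iff_exists_adj x).2 ⟨y, hxy⟩
  have hr0 : 0 ≤ r := div_nonneg (by linarith) (by linarith)
  have hr1 : r ≤ 1 - p := div_le_self (by linarith) hd
  have hNx : ∀ z, z ∈ G.neighborFinset x \ By ↔ z ∈ Bx ∧ z ∉ By := by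
    intro z
    rw [← Finset.mem_sdiff, hBx, hBy, neighborFinset_sdiff_eq G hxy]
  have hNy : ∀ z, z ∈ G.neighborFinset y \ Bx ↔ z ∈ By ∧ z ∉ Bx := by
    intro z
    rw [← Finset.mem_sdiff, hBx, hBy, neighborFinset_sdiff_eq G hxy.symm]
  let F := extendById φ
  have Fpos : ∀ z (h : z ∈ G.neighborFinset x \ By), F z = (φ ⟨z, h⟩).1 := fun z h => dif_pos h
  have Fneg : ∀ z, z ∉ G.neighborFinset x \ By → F z = z := fun z h => dif_neg h
  -- each point of `B(y)` has exactly one preimage in `B(x)`, and no other point has any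
  have hFcol : ∀ b, ∑ a, (if a ∈ Bx ∧ b = F a then r else 0) = if b ∈ By then r else 0 := by
    intro b
    have hF : ∀ a ∈ Bx, F a ∈ By := by
      intro a ha
      by_cases h : a ∈ G.neighborFinset x \ By
      · rw [Fpos a h]; exact ((hNy _).1 (φ ⟨a, h⟩).2).1
      · rw [Fneg a h]; by_contra h'; exact h ((hNx a).2 ⟨ha, h'⟩)
    by_cases hb : b ∈ By
    · rw [if_pos hb]
      obtain ⟨a₀, h₀⟩ : ∃ a₀, ∀ a, (a ∈ Bx ∧ b = F a) ↔ a = a₀ := by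
        by_cases hb' : b ∈ Bx
        · refine ⟨b, fun a => ⟨?_, ?_⟩⟩
          · rintro ⟨ha, h⟩
            by_cases h' : a ∈ G.neighborFinset x \ By
            · rw [Fpos a h'] at h
              exact absurd hb' (h ▸ ((hNy _).1 (φ ⟨a, h'⟩).2).2)
            · rw [Fneg a h'] at h
              exact h.symm
          · rintro rfl
            exact ⟨hb', (Fneg a fun h => ((hNx a).1 h).2 hb).symm⟩
        · have hbN := (hNy b).2 ⟨hb, hb'⟩
          refine ⟨(φ.symm ⟨b, hbN⟩).1, fun a => ⟨?_, ?_⟩⟩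
          · rintro ⟨ha, h⟩
            by_cases h' : a ∈ G.neighborFinset x \ By
            · rw [Fpos a h'] at h
              have : φ.symm ⟨b, hbN⟩ = ⟨a, h'⟩ := by
                rw [Equiv.symm_apply_eq]; exact Subtype.ext h
              rw [this]
            · rw [Fneg a h'] at h
              exact absurd (h ▸ ha) hb'
          · rintro rfl
            have h' := (φ.symm ⟨b, hbN⟩).2
            refine ⟨((hNx _).1 h').1, ?_⟩
            rw [Fpos _ h']
            simp
      simp [h₀]
    · rw [if_neg hb]
      refine Finset.sum_eq_zero fun a _ => if_neg ?_
      rintro ⟨ha, rfl⟩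
      exact hb (hF a ha)
  let π : V → V → ℝ := fun a b =>
    (if a ∈ Bx ∧ b = F a then r else 0) + (if a = x ∧ b = y then p - r else 0)
  have hπ0 : ∀ a b, 0 ≤ π a b := by
    intro a b
    have : 0 ≤ p - r := by linarith
    dsimp only [π]
    positivity
  have hrow : ∀ a, ∑ b, π a b = muP G p x a := by
    intro a
    rw [muP_eq, Finset.sum_add_distrib, add_comm]
    congr 1
    · by_cases h : a = x <;> simp [h, hr]
    · by_cases h : a ∈ Bx <;> simp [h, hr, ← hBx]
  have hcol : ∀ b, ∑ a, π a b = muP G p y b := by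
    intro b
    rw [muP_eq, Finset.sum_add_distrib, hFcol, add_comm, ← hdeg]
    congr 1
    · by_cases h : b = y <;> simp [h, hr]
    · rw [hBy]
  refine ⟨π, ⟨fun a b => ⟨hπ0 a b, ?_⟩, hrow, hcol⟩, ?_⟩
  · have h1 : π a b ≤ ∑ b, π a b :=
      Finset.single_le_sum (f := π a) (fun b _ => hπ0 a b) (Finset.mem_univ b)
    refine h1.trans ?_
    rw [hrow]
    unfold muP
    split_ifs
    · exact hp1
    · rw [← hr]; linarith
    · exact zero_le_one
  · have hsum : ∀ a, ∑ b, (G.dist a b : ℝ) * π a b =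
        (if a ∈ Bx then (G.dist a (F a) : ℝ) * r else 0) + (if a = x then p - r else 0) := by
      intro a
      simp only [π, mul_add, Finset.sum_add_distrib]
      congr 1
      · by_cases h : a ∈ Bx <;> simp [h]
      · by_cases h : a = x <;> simp [h, SimpleGraph.dist_eq_one_iff_adj.2 hxy]
    have hmove : ∑ a ∈ Bx, (G.dist a (F a) : ℝ) * r = r * ∑ a, (G.dist a.1 (φ a).1 : ℝ) := by
      rw [← Finset.sum_mul, mul_comm]
      congr 1
      have hsub : G.neighborFinset x \ By ⊆ Bx := fun z hz => ((hNx z).1 hz).1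
      rw [← Finset.sum_subset hsub, ← Finset.sum_coe_sort]
      · exact Finset.sum_congr rfl fun a _ => by rw [Fpos a.1 a.2]
      · intro z _ hz
        simp [Fneg z hz]
    rw [planCost]
    simp only [hsum, Finset.sum_add_distrib, Finset.sum_ite_mem, Finset.univ_inter, hmove]
    simp [add_comm]

/-! ### The curvature of an edge -/

/-- For adjacent vertices `x, y` of equal degree `d` in a connected locally finite
graph, `κ_LLY(x,y) = (1/d)(d + 1 − min_φ ∑_{v ∈ N_x} d(v, φ(v)))`, the minimum over all
bijections `φ : N_x → N_y`, where `N_x = S_1(x) \ (S_1(y) ∪ {y})` and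
`N_y = S_1(y) \ (S_1(x) ∪ {x})`. -/
theorem kappaLLY_eq_of_equal_degree
    {V : Type*} [Fintype V] (G : SimpleGraph V) (hconn : G.Connected)
    (x y : V) (hxy : G.Adj x y) (d : ℕ)
    (hdx : G.degree x = d) (hdy : G.degree y = d) :
    kappaLLY G x y = (1 / (d : ℝ)) * ((d : ℝ) + 1 -
      sInf {s : ℝ |
        ∃ φ : {v // v ∈ G.neighborFinset x \ insert y (G.neighborFinset y)} ≃
              {v // v ∈ G.neighborFinset y \ insert x (G.neighborFinset x)},
          s = ∑ v, (G.dist v.1 (φ v).1 : ℝ)}) := by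
  obtain ⟨φ, f, hf, hfxy, hfφ⟩ := exists_matching_potentials G hconn hxy (hdx.trans hdy.symm)
  set M : ℝ := ∑ v, (G.dist v.1 (φ v).1 : ℝ) with hM
  -- weak duality, applied to an arbitrary bijection in place of `φ`
  have hfM : ∀ ψ : {v // v ∈ G.neighborFinset x \ insert y (G.neighborFinset y)} ≃
      {v // v ∈ G.neighborFinset y \ insert x (G.neighborFinset x)},
      ∑ v, (f v.1 - f (ψ v).1) =
        ∑ z ∈ insert x (G.neighborFinset x), f z - ∑ z ∈ insert y (G.neighborFinset y), f z := by
    intro ψ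
    rw [Finset.sum_sub_distrib, Equiv.sum_comp ψ fun w => f w.1, Finset.sum_coe_sort,
      Finset.sum_coe_sort, neighborFinset_sdiff_eq G hxy, neighborFinset_sdiff_eq G hxy.symm,
      Finset.sum_sdiff_sub_sum_sdiff]
  have hMle : M ≤ ∑ z ∈ insert x (G.neighborFinset x), f z -
      ∑ z ∈ insert y (G.neighborFinset y), f z := by
    rw [← hfM φ]
    exact Finset.sum_le_sum fun v _ => hfφ v
  have hInf : sInf {s : ℝ |
        ∃ φ : {v // v ∈ G.neighborFinset x \ insert y (G.neighborFinset y)} ≃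
              {v // v ∈ G.neighborFinset y \ insert x (G.neighborFinset x)},
          s = ∑ v, (G.dist v.1 (φ v).1 : ℝ)} = M := by
    refine IsLeast.csInf_eq ⟨⟨φ, rfl⟩, ?_⟩
    rintro _ ⟨ψ, rfl⟩
    rw [← hfM ψ] at hMle
    exact hMle.trans (Finset.sum_le_sum fun v _ => hf _ _)
  have hd : (1 : ℝ) ≤ d := by
    rw [← hdx]
    exact_mod_cast (G.degree_pos_iff_exists_adj x).2 ⟨y, hxy⟩
  have hW : ∀ p : ℝ, 1 / 2 ≤ p → p ≤ 1 →
      Wdist G (muP G p x) (muP G p y) = (p - (1 - p) / d) + (1 - p) / d * M := by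
    intro p hp hp1
    obtain ⟨π, hπ, hcost⟩ := isTransportPlan_matching G hxy (hdx.trans hdy.symm) rfl rfl φ hp hp1
    rw [hdx] at hcost
    refine IsLeast.csInf_eq ⟨⟨π, hπ, hcost.symm⟩, ?_⟩
    rintro _ ⟨π', hπ', rfl⟩
    refine le_trans ?_ (sum_sub_sum_le_planCost G hπ' f hf)
    rw [sum_mul_muP, sum_mul_muP, hdx, hdy]
    have hr0 : 0 ≤ (1 - p) / d := div_nonneg (by linarith) (by linarith)
    have hr1 : (1 - p) / d ≤ 1 - p := div_le_self (by linarith) hd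
    have h1 := mul_le_mul_of_nonneg_left hfxy (show 0 ≤ p - (1 - p) / d by linarith)
    have h2 := mul_le_mul_of_nonneg_left hMle hr0
    linarith
  rw [hInf, kappaLLY]
  refine Tendsto.limUnder_eq (tendsto_const_nhds.congr' ?_)
  filter_upwards [Ioo_mem_nhdsLT (show (1 / 2 : ℝ) < 1 by norm_num)] with p hp
  rw [hW p hp.1.le hp.2.le, SimpleGraph.dist_eq_one_iff_adj.2 hxy]
  have h1 : (1 - p) ≠ 0 := by linarith [hp.2]
  have h2 : (d : ℝ) ≠ 0 := by linarith
  field_simp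
  ring
end

section
/- Let G be a finite connected simple graph and let x and y be two adjacent vertices with d_x ≥ d_y. For any p ∈ [1/(1+d_y), 1], there exists a simple optimal transport plan π from μ_x^p to μ_y^p such that π(x,y) = p − (1−p)/d_y. -/
/-!
The set of transport plans is compact, so there is a plan `π` that minimises the cost and, among
the cost minimisers, maximises the linear functional `2 ∑ π(v,v) + π(x,y)`
(`exists_lexOptimal`). Such a plan cannot be improved by exchanging the targets of two pieces of
mass: if `π` moves mass along `u₁ → v₂` and `u₂ → v₁`, and rerouting along `u₁ → v₁`,
`u₂ → v₂` does not increase the cost, then the rerouting does not increase the secondary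
functional (`lexOptimal_exchange`).

* If `π(v,v) < min (μ_x v) (μ_y v)`, then `π` moves mass `v → u` and `w → v` with `u, w ≠ v`.
  Rerouting to `v → v`, `w → u` is no dearer by the triangle inequality, and it gains weight
  `2` on the diagonal while losing at most `1` at `(x,y)`. So `π` is simple.
* Since `p ≥ (1-p)/d_y`, simplicity leaves mass `p - (1-p)/d_y` to be moved out of `x`. If not
  all of it goes to `y`, then `π` moves mass `x → z` with `z ≠ x, y`, and, because `d_x ≥ d_y`,
  also `w → y` with `w ≠ x, y`. Here `w` is a neighbour of `x`, and not one of `y`: at a common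
  neighbour `μ_x ≤ μ_y`, so a simple plan moves nothing out of it. Hence
  `d(x,y) + d(w,z) ≤ 1 + (1 + d(x,z)) ≤ d(x,z) + d(w,y)`, and rerouting to `x → y`, `w → z`
  would increase `π(x,y)`.
-/

open Filter Finset

attribute [local instance] Classical.propDecidable

variable {V : Type*}

section Exchange

variable {W : Type*} [Fintype W]

/-- The pairing `∑ c(u,v) π(u,v)` of a weight with a plan. -/
noncomputable def pairing (c π : W → W → ℝ) : ℝ := ∑ u, ∑ v, c u v * π u v

/-- `π` minimises the pairing with `c` among transport plans and, among the minimisers, maximises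
the pairing with `f`. -/
def LexOptimal (μ₁ μ₂ : W → ℝ) (c f π : W → W → ℝ) : Prop :=
  IsTransportPlan μ₁ μ₂ π ∧
  (∀ σ, IsTransportPlan μ₁ μ₂ σ → pairing c π ≤ pairing c σ) ∧
  (∀ σ, IsTransportPlan μ₁ μ₂ σ → pairing c σ ≤ pairing c π → pairing f σ ≤ pairing f π)

lemma continuous_pairing (c : W → W → ℝ) : Continuous (pairing c) := by
  unfold pairing; fun_prop

lemma isCompact_plans (μ₁ μ₂ : W → ℝ) : IsCompact {π | IsTransportPlan μ₁ μ₂ π} := by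
  have hK : IsCompact (Set.Icc (0 : W → W → ℝ) 1) := isCompact_Icc
  refine hK.of_isClosed_subset ?_ fun π h => ⟨fun u v => (h.1 u v).1, fun u v => (h.1 u v).2⟩
  simp only [IsTransportPlan, Set.ofPred_and, Set.ofPred_forall]
  refine IsClosed.inter ?_ (IsClosed.inter ?_ ?_)
  · exact isClosed_iInter fun u => isClosed_iInter fun v =>
      (isClosed_le (by fun_prop) (by fun_prop)).inter (isClosed_le (by fun_prop) (by fun_prop))
  · exact isClosed_iInter fun u => isClosed_eq (by fun_prop) (by fun_prop)
  · exact isClosed_iInter fun v => isClosed_eq (by fun_prop) (by fun_prop)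

lemma exists_lexOptimal {μ₁ μ₂ : W → ℝ} (hne : ∃ π, IsTransportPlan μ₁ μ₂ π)
    (c f : W → W → ℝ) : ∃ π, LexOptimal μ₁ μ₂ c f π := by
  obtain ⟨π₀, h₀, hmin⟩ :=
    (isCompact_plans μ₁ μ₂).exists_isMinOn hne (continuous_pairing c).continuousOn
  have hK : IsCompact ({π | IsTransportPlan μ₁ μ₂ π} ∩ {π | pairing c π ≤ pairing c π₀}) :=
    (isCompact_plans μ₁ μ₂).inter_right (isClosed_le (continuous_pairing c) continuous_const)
  obtain ⟨π, ⟨h, hc⟩, hmax⟩ :=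
    hK.exists_isMaxOn ⟨π₀, h₀, le_refl (pairing c π₀)⟩ (continuous_pairing f).continuousOn
  exact ⟨π, h, fun σ hσ => le_trans hc (hmin hσ), fun σ hσ hle => hmax ⟨hσ, le_trans hle hc⟩⟩

/-- The plan `π` with mass `ε` rerouted from `u₁ → v₂`, `u₂ → v₁` to `u₁ → v₁`, `u₂ → v₂`. The
product form makes the invariance of the marginals evident. -/
noncomputable def reroute (π : W → W → ℝ) (ε : ℝ) (u₁ u₂ v₁ v₂ : W) : W → W → ℝ := fun u v =>
  π u v + ε * (((if u = u₁ then 1 else 0) - (if u = u₂ then 1 else 0)) *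
    ((if v = v₁ then 1 else 0) - (if v = v₂ then 1 else 0)))

lemma pairing_reroute (c π : W → W → ℝ) (ε : ℝ) (u₁ u₂ v₁ v₂ : W) :
    pairing c (reroute π ε u₁ u₂ v₁ v₂) =
      pairing c π + ε * (c u₁ v₁ + c u₂ v₂ - c u₁ v₂ - c u₂ v₁) := by
  have h : ∀ u, ∑ v, c u v * reroute π ε u₁ u₂ v₁ v₂ u v = (∑ v, c u v * π u v) +
      (ε * (c u v₁ - c u v₂)) * ((if u = u₁ then 1 else 0) - (if u = u₂ then 1 else 0)) := by
    intro u
    have h' : ∀ v, c u v * reroute π ε u₁ u₂ v₁ v₂ u v = c u v * π u v +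
        (ε * ((if u = u₁ then 1 else 0) - (if u = u₂ then 1 else 0))) *
          (c u v * (if v = v₁ then 1 else 0) - c u v * (if v = v₂ then 1 else 0)) := by
      intro v; unfold reroute; ring
    simp only [h', Finset.sum_add_distrib, ← Finset.mul_sum, Finset.sum_sub_distrib]
    simp only [mul_ite, mul_one, mul_zero, Finset.sum_ite_eq', Finset.mem_univ, if_true]
    ring
  unfold pairing
  simp only [h, Finset.sum_add_distrib, mul_sub, Finset.sum_sub_distrib]
  simp only [mul_ite, mul_one, mul_zero, Finset.sum_ite_eq', Finset.mem_univ, if_true]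
  ring

lemma IsTransportPlan.reroute {μ₁ μ₂ : W → ℝ} {π : W → W → ℝ} (h : IsTransportPlan μ₁ μ₂ π)
    {ε : ℝ} {u₁ u₂ v₁ v₂ : W} (hε : 0 ≤ ε) (h₁ : ε ≤ π u₁ v₂) (h₂ : ε ≤ π u₂ v₁)
    (hu : u₁ ≠ u₂) (hμ : ∀ u, μ₁ u ≤ 1) :
    IsTransportPlan μ₁ μ₂ (reroute π ε u₁ u₂ v₁ v₂) := by
  have hnn : ∀ u v, 0 ≤ _root_.reroute π ε u₁ u₂ v₁ v₂ u v := by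
    intro u v
    have := (h.1 u v).1
    unfold _root_.reroute
    split_ifs <;> subst_vars <;> first | contradiction | linarith
  have hrow : ∀ u, ∑ v, _root_.reroute π ε u₁ u₂ v₁ v₂ u v = μ₁ u := by
    intro u
    simp [_root_.reroute, Finset.sum_add_distrib, ← Finset.mul_sum, h.2.1 u]
  refine ⟨fun u v => ⟨hnn u v, ?_⟩, hrow, fun v => ?_⟩
  · exact (Finset.single_le_sum (fun w _ => hnn u w) (Finset.mem_univ v)).trans
      ((hrow u).trans_le (hμ u))
  · simp [_root_.reroute, Finset.sum_add_distrib, ← Finset.mul_sum, ← Finset.sum_mul, h.2.2 v]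

/-- A lexicographically optimal plan admits no rerouting that is free for `c` and gainful for
`f`. -/
lemma lexOptimal_exchange {μ₁ μ₂ : W → ℝ} {c f π : W → W → ℝ} (h : LexOptimal μ₁ μ₂ c f π)
    (hμ : ∀ u, μ₁ u ≤ 1) {u₁ u₂ v₁ v₂ : W} (h₁ : 0 < π u₁ v₂) (h₂ : 0 < π u₂ v₁)
    (hu : u₁ ≠ u₂) (hc : c u₁ v₁ + c u₂ v₂ ≤ c u₁ v₂ + c u₂ v₁) :
    f u₁ v₁ + f u₂ v₂ ≤ f u₁ v₂ + f u₂ v₁ := by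
  have hε : 0 < min (π u₁ v₂) (π u₂ v₁) := lt_min h₁ h₂
  have hσ := h.1.reroute hε.le (min_le_left _ _) (min_le_right _ _) hu hμ
  have := h.2.2 _ hσ (by rw [pairing_reroute]; nlinarith)
  rw [pairing_reroute] at this
  nlinarith

end Exchange

lemma exists_ne_pos_of_lt_sum {W : Type*} [Fintype W] {g : W → ℝ} {S : Finset W}
    (h : ∑ v ∈ S, g v < ∑ v, g v) : ∃ v, v ∉ S ∧ 0 < g v := by
  by_contra! hcon
  rw [← Finset.sum_add_sum_compl S g] at h
  have : ∑ v ∈ Sᶜ, g v ≤ 0 := Finset.sum_nonpos fun v hv => hcon v (by simpa using hv)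
  linarith

section Measure

variable {W : Type*} [Fintype W] (G : SimpleGraph W)

lemma muP_nonneg {p : ℝ} (h0 : 0 ≤ p) (h1 : p ≤ 1) (x z : W) : 0 ≤ muP G p x z := by
  have : 0 ≤ (1 - p) / (G.degree x : ℝ) := div_nonneg (by linarith) (by positivity)
  unfold muP; split_ifs <;> first | assumption | exact le_rfl

lemma sum_muP (p : ℝ) {x : W} (hx : 0 < G.degree x) : ∑ z, muP G p x z = 1 := by
  have h : ∀ z, muP G p x z = (if z = x then p else 0) +
      (if z ∈ G.neighborFinset x then (1 - p) / (G.degree x : ℝ) else 0) := by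
    intro z
    unfold muP
    by_cases hz : z = x
    · subst hz; simp
    · simp [hz]
  have hx' : (G.degree x : ℝ) ≠ 0 := by positivity
  simp only [h, Finset.sum_add_distrib, Finset.sum_ite_eq', Finset.mem_univ, if_true,
    Finset.sum_ite_mem, Finset.univ_inter, Finset.sum_const, SimpleGraph.card_neighborFinset_eq_degree,
    nsmul_eq_mul]
  field_simp
  ring

lemma muP_le_one {p : ℝ} (h0 : 0 ≤ p) (h1 : p ≤ 1) {x : W} (hx : 0 < G.degree x) (z : W) :
    muP G p x z ≤ 1 := by
  rw [← sum_muP G p hx]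
  exact Finset.single_le_sum (fun w _ => muP_nonneg G h0 h1 x w) (Finset.mem_univ z)

/-- The witness is the product coupling of the two measures. -/
lemma exists_plan {p : ℝ} (h0 : 0 ≤ p) (h1 : p ≤ 1) {x y : W} (hx : 0 < G.degree x)
    (hy : 0 < G.degree y) : ∃ π, IsTransportPlan (muP G p x) (muP G p y) π := by
  refine ⟨fun u v => muP G p x u * muP G p y v, fun u v => ⟨?_, ?_⟩, fun u => ?_, fun v => ?_⟩
  · exact mul_nonneg (muP_nonneg G h0 h1 x u) (muP_nonneg G h0 h1 y v)
  · exact mul_le_one₀ (muP_le_one G h0 h1 hx u) (muP_nonneg G h0 h1 y v) (muP_le_one G h0 h1 hy v)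
  · rw [← Finset.mul_sum, sum_muP G p hy, mul_one]
  · rw [← Finset.sum_mul, sum_muP G p hx, one_mul]

end Measure

/-- For adjacent `x, y` with `d_x ≥ d_y` and `p ∈ [1/(1+d_y), 1]`, there exists a
simple optimal transport plan `π` from `μ_x^p` to `μ_y^p` with `π(x,y) = p − (1−p)/d_y`. -/
theorem exists_simple_optimal_transport_plan
    {V : Type*} [Fintype V] (G : SimpleGraph V) (hconn : G.Connected)
    (x y : V) (hxy : G.Adj x y) (hd : G.degree y ≤ G.degree x)
    (p : ℝ) (hp : p ∈ Set.Icc (1 / (1 + (G.degree y : ℝ))) 1) :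
    ∃ π : V → V → ℝ, IsTransportPlan (muP G p x) (muP G p y) π ∧
      (∀ v : V, π v v = min (muP G p x v) (muP G p y v)) ∧
      planCost G π = Wdist G (muP G p x) (muP G p y) ∧
      π x y = p - (1 - p) / (G.degree y : ℝ) := by
  have hdy : 0 < G.degree y := (G.degree_pos_iff_exists_adj y).2 ⟨x, hxy.symm⟩
  have hdx : 0 < G.degree x := hdy.trans_le hd
  obtain ⟨hp0, hp1⟩ := hp
  have hdy' : (0 : ℝ) < G.degree y := by exact_mod_cast hdy
  have hpos : 0 ≤ p := le_trans (by positivity) hp0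
  have hbp : (1 - p) / (G.degree y : ℝ) ≤ p := by
    rw [div_le_iff₀ (by positivity)] at hp0 ⊢
    linarith
  have hab : (1 - p) / (G.degree x : ℝ) ≤ (1 - p) / (G.degree y : ℝ) :=
    div_le_div_of_nonneg_left (by linarith) hdy' (by exact_mod_cast hd)
  have hne := hxy.ne
  have hxx : muP G p x x = p := by simp [muP]
  have hyy : muP G p y y = p := by simp [muP]
  have hxy' : muP G p x y = (1 - p) / (G.degree x : ℝ) := by simp [muP, hxy, hne.symm]
  have hyx : muP G p y x = (1 - p) / (G.degree y : ℝ) := by simp [muP, hxy.symm, hne]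
  have hμ := muP_le_one G hpos hp1 hdx
  -- The weight `2` lets a gain on the diagonal outweigh a loss at `(x, y)`.
  obtain ⟨π, hπ⟩ := exists_lexOptimal (exists_plan G hpos hp1 hdx hdy)
    (fun u v => (G.dist u v : ℝ))
    (fun u v => (if u = v then 2 else 0) + (if u = x ∧ v = y then 1 else 0))
  have hnn : ∀ u v, 0 ≤ π u v := fun u v => (hπ.1.1 u v).1
  have hrow := hπ.1.2.1
  have hcol := hπ.1.2.2
  have hsimple : ∀ v : V, π v v = min (muP G p x v) (muP G p y v) := by
    intro v
    refine le_antisymm (le_min ?_ ?_) ?_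
    · rw [← hrow v]; exact Finset.single_le_sum (fun w _ => hnn v w) (Finset.mem_univ v)
    · rw [← hcol v]
      exact Finset.single_le_sum (f := fun w => π w v) (fun w _ => hnn w v) (Finset.mem_univ v)
    by_contra! hlt
    obtain ⟨hlt₁, hlt₂⟩ := lt_min_iff.1 hlt
    obtain ⟨u, hu, hvu⟩ := exists_ne_pos_of_lt_sum (g := fun u => π v u) (S := {v})
      (by simpa [hrow] using hlt₁)
    obtain ⟨w, hw, hwv⟩ := exists_ne_pos_of_lt_sum (g := fun w => π w v) (S := {v})
      (by simpa [hcol] using hlt₂)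
    rw [Finset.mem_singleton] at hu hw
    have htri : (G.dist w u : ℝ) ≤ G.dist w v + G.dist v u := by
      exact_mod_cast hconn.dist_triangle
    have := lexOptimal_exchange hπ hμ hvu hwv (Ne.symm hw) (by simp; linarith)
    simp only [if_true, hw, Ne.symm hu, if_false] at this
    split_ifs at this <;> first | linarith | simp_all
  refine ⟨π, hπ.1, hsimple, ?_, ?_⟩
  · refine Eq.symm (IsLeast.csInf_eq (a := planCost G π) ⟨⟨π, hπ.1, rfl⟩, ?_⟩)
    rintro c ⟨σ, hσ, rfl⟩
    exact hπ.2.1 σ hσ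
  have hpx := hsimple x
  rw [hxx, hyx, min_eq_right hbp] at hpx
  have hpy := hsimple y
  rw [hxy', hyy, min_eq_left (hab.trans hbp)] at hpy
  refine le_antisymm ?_ ?_
  · have := Finset.sum_le_sum_of_subset_of_nonneg (Finset.subset_univ {x, y})
      (fun v _ _ => hnn x v)
    rw [hrow, Finset.sum_pair hne, hxx] at this
    linarith
  by_contra! hlt
  obtain ⟨z, hz, hxz⟩ := exists_ne_pos_of_lt_sum (g := fun u => π x u) (S := {x, y})
    (by rw [Finset.sum_pair hne, hrow, hxx]; linarith)
  obtain ⟨w, hw, hwy⟩ := exists_ne_pos_of_lt_sum (g := fun u => π u y) (S := {x, y})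
    (by rw [Finset.sum_pair hne, hcol, hyy]; linarith)
  simp only [Finset.mem_insert, Finset.mem_singleton, not_or] at hz hw
  have hpair : π w w + π w y ≤ muP G p x w := by
    rw [← hrow w, ← Finset.sum_pair hw.2]
    exact Finset.sum_le_sum_of_subset_of_nonneg (Finset.subset_univ _) (fun v _ _ => hnn w v)
  have hwx : G.Adj x w := by
    by_contra hcon
    have : muP G p x w = 0 := by simp [muP, hw.1, hcon]
    linarith [hnn w w]
  -- At a common neighbour a simple plan leaves all mass in place.
  have hnwy : ¬ G.Adj y w := by
    intro hcon
    have h₁ : muP G p x w = (1 - p) / (G.degree x : ℝ) := by simp [muP, hw.1, hwx]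
    have h₂ : muP G p y w = (1 - p) / (G.degree y : ℝ) := by simp [muP, hw.2, hcon]
    have := hsimple w
    rw [h₁, h₂, min_eq_left hab] at this
    linarith
  have hd1 : G.dist x y = 1 := SimpleGraph.dist_eq_one_iff_adj.2 hxy
  have hd2 : G.dist w x = 1 := SimpleGraph.dist_eq_one_iff_adj.2 hwx.symm
  have hd3 : 2 ≤ G.dist w y := by
    have h0 : 0 < G.dist w y := hconn.pos_dist_of_ne hw.2
    have h1 : G.dist w y ≠ 1 := fun h => hnwy (SimpleGraph.dist_eq_one_iff_adj.1 h).symm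
    omega
  have hd4 : G.dist w z ≤ G.dist w x + G.dist x z := hconn.dist_triangle
  have hcost : G.dist x y + G.dist w z ≤ G.dist x z + G.dist w y := by omega
  have := lexOptimal_exchange hπ hμ hxz hwy (Ne.symm hw.1) (by exact_mod_cast hcost)
  simp only [hne, Ne.symm hz.1, hz.2, hw.1, hw.2, if_true, if_false, and_self, and_false,
    false_and] at this
  split_ifs at this <;> linarith
end
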